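/- Let A be any m×m real matrix, let B be an n×n real matrix all of whose column sums equal S_B, and let k ≥ 1. If u is a vector of length n with (Bᵀ·B)·u = τ·u and ∑_p u(p) = 0, then the Gramian of the aggregated compound C_A = n^k·(A ⊗ E_n) + (E_m ⊗ B) satisfies (C_Aᵀ·C_A)·(e_m ⊗ u) = (m²·τ)·(e_m ⊗ u). Hence if η is a non-dominant singular value of B (with right singular vector orthogonal to e_n), then m·η is a singular value of C_A. -/

import Mathlib

open Kronecker Matrix

/-! A vector `e_m ⊗ w` with `∑ w = 0` is killed by `A ⊗ E`, while `E ⊗ B` multiplies `w` by `B` and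
contributes a factor `m`. Constant column sums of `B` ensure that `B w` again sums to zero, so the
same reasoning applies to the transposed compound, and the Gramian acts on `e_m ⊗ u` as `m² • BᵀB`
acts on `u`. -/

section

variable {l m p n R : Type*}

theorem sum_mulVec_of_forall_col_sum_eq [NonUnitalNonAssocSemiring R] [Fintype p] [Fintype n]
    {B : Matrix p n R} {s : R} (hB : ∀ q, ∑ r, B r q = s) (w : n → R) :
    ∑ r, (B *ᵥ w) r = s * ∑ q, w q := by
  simp only [mulVec, dotProduct]
  rw [Finset.sum_comm]
  simp only [← Finset.sum_mul, hB, ← Finset.mul_sum]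

section NonAssocSemiring

variable [NonAssocSemiring R]

/-- The aggregated compound `A ⊗ E + E ⊗ B`, where `E` is an all-ones matrix. The weight `n ^ k` of
the first summand is absorbed into `A`, and the factors may be rectangular. The vector `e ⊗ w` on
which it acts is written `w ∘ Prod.snd`. -/
def aggregatedCompound (A : Matrix l m R) (B : Matrix p n R) : Matrix (l × p) (m × n) R :=
  A ⊗ₖ (Matrix.of fun _ _ => 1) + (Matrix.of fun _ _ => 1) ⊗ₖ B

theorem transpose_aggregatedCompound (A : Matrix l m R) (B : Matrix p n R) :
    (aggregatedCompound A B)ᵀ = aggregatedCompound Aᵀ Bᵀ :=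
  rfl

variable [Fintype m] [Fintype n]

theorem kronecker_ones_mulVec_comp_snd (A : Matrix l m R) {w : n → R} (hw : ∑ q, w q = 0) :
    (A ⊗ₖ (Matrix.of fun (_ : p) _ => 1)) *ᵥ (w ∘ Prod.snd) = 0 := by
  ext ⟨i, r⟩
  simp [mulVec, dotProduct, Fintype.sum_prod_type, ← Finset.mul_sum, hw]

theorem ones_kronecker_mulVec_comp_snd (B : Matrix p n R) (w : n → R) :
    ((Matrix.of fun (_ : l) (_ : m) => 1) ⊗ₖ B) *ᵥ (w ∘ Prod.snd)
      = (Fintype.card m • B *ᵥ w) ∘ Prod.snd := by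
  ext ⟨i, r⟩
  simp [mulVec, dotProduct, Fintype.sum_prod_type]

theorem aggregatedCompound_mulVec_comp_snd (A : Matrix l m R) (B : Matrix p n R) {w : n → R}
    (hw : ∑ q, w q = 0) :
    aggregatedCompound A B *ᵥ (w ∘ Prod.snd) = (Fintype.card m • B *ᵥ w) ∘ Prod.snd := by
  rw [aggregatedCompound, add_mulVec, kronecker_ones_mulVec_comp_snd A hw, zero_add,
    ones_kronecker_mulVec_comp_snd]

end NonAssocSemiring

theorem aggregated_compound_gramian_from_B_general [Semiring R] [Fintype l] [Fintype m]
    [Fintype p] [Fintype n] (A : Matrix l m R) (B : Matrix p n R) {u : n → R} {τ : R}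
    (hu : (Bᵀ * B) *ᵥ u = τ • u) (hsum : ∑ q, u q = 0) (hBu : ∑ r, (B *ᵥ u) r = 0) :
    ((aggregatedCompound A B)ᵀ * aggregatedCompound A B) *ᵥ (u ∘ Prod.snd)
      = (Fintype.card l * Fintype.card m * τ) • (u ∘ Prod.snd) := by
  have hmBu : ∑ r, (Fintype.card m • B *ᵥ u) r = 0 := by
    simp only [Pi.smul_apply, ← Finset.smul_sum, hBu, smul_zero]
  calc ((aggregatedCompound A B)ᵀ * aggregatedCompound A B) *ᵥ (u ∘ Prod.snd)
    _ = aggregatedCompound Aᵀ Bᵀ *ᵥ ((Fintype.card m • B *ᵥ u) ∘ Prod.snd) := by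
      rw [← mulVec_mulVec, aggregatedCompound_mulVec_comp_snd A B hsum,
        transpose_aggregatedCompound]
    _ = (Fintype.card l • Fintype.card m • (Bᵀ * B) *ᵥ u) ∘ Prod.snd := by
      rw [aggregatedCompound_mulVec_comp_snd Aᵀ Bᵀ hmBu, mulVec_smul, mulVec_mulVec]
    _ = (Fintype.card l * Fintype.card m * τ) • (u ∘ Prod.snd) := by
      ext jq
      simp [hu, mul_assoc]

end

/-- If all column sums of `B` equal `S_B`, and `u` satisfies
`(Bᵀ·B)·u = τ·u` with `∑ u = 0`, then the Gramian of the aggregated compound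
`C_A = n^k • (A ⊗ E_n) + (E_m ⊗ B)` satisfies
`(C_Aᵀ·C_A)·(e_m ⊗ u) = m²·τ·(e_m ⊗ u)`. -/
theorem aggregated_compound_gramian_from_B
    {m n k : ℕ} (hk : 1 ≤ k)
    (A : Matrix (Fin m) (Fin m) ℝ) (B : Matrix (Fin n) (Fin n) ℝ) (SB : ℝ)
    (hBcol : ∀ q, ∑ p, B p q = SB)
    (u : Fin n → ℝ) (τ : ℝ)
    (hu : (Bᵀ * B).mulVec u = τ • u) (hsum : ∑ p, u p = 0)
    (C : Matrix (Fin m × Fin n) (Fin m × Fin n) ℝ)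
    (hC : C = (n : ℝ) ^ k • (A ⊗ₖ (Matrix.of fun _ _ => (1 : ℝ)))
            + ((Matrix.of fun _ _ => (1 : ℝ)) ⊗ₖ B)) :
    (Cᵀ * C).mulVec (fun ip : Fin m × Fin n => u ip.2)
      = ((m : ℝ) ^ 2 * τ) • fun ip : Fin m × Fin n => u ip.2 := by
  have hBu : ∑ p, (B *ᵥ u) p = 0 := by rw [sum_mulVec_of_forall_col_sum_eq hBcol, hsum, mul_zero]
  simpa [hC, aggregatedCompound, smul_kronecker, sq, Function.comp_def] using
    aggregated_compound_gramian_from_B_general ((n : ℝ) ^ k • A) B hu hsum hBu
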